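/- arXiv:1903.08396 — 3 statements merged into one kernel-verified Lean document; each statement's English description precedes it below -/
import Mathlib

section
/- Let V be a finite-dimensional complex vector space of dimension r and let f : V → V be a linear endomorphism whose minimal polynomial has degree r. Then for an endomorphism u of V, there exists g ∈ End(V) with u = f∘g − g∘f if and only if Tr(fⁱ ∘ u) = 0 for every natural number i; that is, the image of the adjoint map ad(f) : g ↦ f∘g − g∘f equals the trace-orthogonal complement of the polynomials in f. -/
/-!
The trace form `(a, b) ↦ Tr (a b)` on `End V` is nondegenerate and `ad f` is skew-adjoint for it,
so for every `f` the image of `ad f` is the orthogonal complement of its kernel, the centralizer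
of `f`. When the minimal polynomial of `f` has degree `dim V`, a vector whose annihilator in
`K[X]` is generated by the minimal polynomial is cyclic by dimension count. An endomorphism
commuting with `f` is determined by its value at a cyclic vector, hence is a polynomial in `f`,
and orthogonality to the centralizer becomes orthogonality to the powers of `f`.
-/

open Polynomial Module

section InvariantForm

variable {R K L M N : Type*}

theorem orthogonal_range_eq_ker_of_isAdjointPair [CommSemiring R] [AddCommMonoid M] [Module R M]
    [AddCommMonoid N] [Module R N] {B : LinearMap.BilinForm R M} {C : LinearMap.BilinForm R N}
    {T : M →ₗ[R] N} {S : N →ₗ[R] M} (hB : B.SeparatingRight)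
    (hTS : LinearMap.IsAdjointPair B C T S) :
    C.orthogonal (LinearMap.range T) = LinearMap.ker S := by
  ext n
  simp only [LinearMap.BilinForm.mem_orthogonal_iff, LinearMap.mem_range, forall_exists_index,
    forall_apply_eq_imp_iff, hTS _ n, LinearMap.mem_ker]
  exact ⟨hB (S n), fun hn m ↦ by rw [hn, map_zero]⟩

theorem range_toEnd_eq_orthogonal_ker [Field K] [LieRing L] [AddCommGroup M]
    [Module K M] [FiniteDimensional K M] [LieAlgebra K L] [LieRingModule L M] [LieModule K L M]
    {Φ : LinearMap.BilinForm K M} (hΦ : Φ.Nondegenerate) (hrefl : Φ.IsRefl)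
    (hinv : Φ.lieInvariant L) (x : L) :
    LinearMap.range (LieModule.toEnd K L M x) =
      Φ.orthogonal (LinearMap.ker (LieModule.toEnd K L M x)) := by
  have skew_adjoint : LinearMap.IsAdjointPair Φ Φ (LieModule.toEnd K L M x)
      (LieModule.toEnd K L M (-x)) := fun m n ↦ by
    rw [LieModule.toEnd_apply_apply, LieModule.toEnd_apply_apply, neg_lie, map_neg, hinv x m n]
  have ker_neg : LinearMap.ker (LieModule.toEnd K L M (-x)) =
      LinearMap.ker (LieModule.toEnd K L M x) := by
    ext m
    simp only [LinearMap.mem_ker, LieModule.toEnd_apply_apply, neg_lie, neg_eq_zero]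
  rw [← ker_neg, ← orthogonal_range_eq_ker_of_isAdjointPair hΦ.2 skew_adjoint,
    LinearMap.BilinForm.orthogonal_orthogonal hΦ hrefl]

end InvariantForm

section CyclicVector

variable {R K M V : Type*}

/-- `x` is a cyclic vector of the endomorphism `f`: every vector has the form `p(f) x` for some
polynomial `p`, i.e. `x` generates the module over `R[X]` on which `X` acts as `f`. -/
def IsCyclicVector [CommSemiring R] [AddCommMonoid M] [Module R M] (f : End R M) (x : M) : Prop :=
  Function.Surjective fun p : R[X] ↦ aeval f p x

theorem IsCyclicVector.centralizer_eq_adjoin [CommSemiring R] [AddCommMonoid M] [Module R M]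
    {f : End R M} {x : M} (hx : IsCyclicVector f x) :
    Subalgebra.centralizer R {f} = Algebra.adjoin R {f} := by
  refine le_antisymm (fun c hc ↦ ?_) (Algebra.adjoin_singleton_le ?_)
  · obtain ⟨p, hp : aeval f p x = c x⟩ := hx (c x)
    suffices c = aeval f p from this ▸ aeval_mem_adjoin_singleton R f
    ext v
    obtain ⟨q, rfl : aeval f q x = v⟩ := hx v
    have hcq : c * aeval f q = aeval f q * c :=
      Algebra.adjoin_le_centralizer_centralizer R {f} (aeval_mem_adjoin_singleton R f) c hc
    calc c (aeval f q x) = aeval f q (c x) := LinearMap.congr_fun hcq x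
      _ = (aeval f q * aeval f p) x := by rw [← hp, End.mul_apply]
      _ = aeval f p (aeval f q x) := by rw [← map_mul, mul_comm, map_mul, End.mul_apply]
  · simp [Subalgebra.mem_centralizer_iff]

variable [Field K] [AddCommGroup V] [Module K V]

theorem linearIndependent_pow_apply {f : End K V} {x : V}
    (hx : ∀ p : K[X], aeval f p x = 0 → aeval f p = 0) :
    LinearIndependent K fun i : Fin (minpoly K f).natDegree ↦ (f ^ (i : ℕ)) x := by
  refine (linearIndependent_pow (K := K) f).map (f := LinearMap.applyₗ x)
    (Submodule.disjoint_def.2 fun a ha hax ↦ ?_)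
  have powers_subset : Set.range (fun i : Fin (minpoly K f).natDegree ↦ f ^ (i : ℕ)) ⊆
      (aeval (R := K) f).toLinearMap.range :=
    Set.range_subset_iff.2 fun i ↦ ⟨X ^ (i : ℕ), aeval_X_pow f⟩
  obtain ⟨p, rfl⟩ := Submodule.span_le.2 powers_subset ha
  exact hx p hax

variable [FiniteDimensional K V]

theorem exists_forall_aeval_eq_zero_of_aeval_apply_eq_zero (f : End K V) :
    ∃ x : V, ∀ p : K[X], aeval f p x = 0 → aeval f p = 0 := by
  obtain ⟨y, hy⟩ := exists_ker_toSpanSingleton_eq_annihilator K[X] (AEval' f)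
  obtain ⟨x, rfl⟩ := (AEval'.of f).surjective y
  refine ⟨x, fun p hp ↦ ?_⟩
  rw [← RingHom.mem_ker, ← AEval.annihilator_eq_ker_aeval (M := V), ← hy, LinearMap.mem_ker,
    LinearMap.toSpanSingleton_apply, ← AEval.of_aeval_smul, End.smul_def, hp, map_zero]

theorem exists_isCyclicVector_of_natDegree_minpoly_eq_finrank {f : End K V}
    (hf : (minpoly K f).natDegree = finrank K V) : ∃ x : V, IsCyclicVector f x := by
  obtain ⟨x, hx⟩ := exists_forall_aeval_eq_zero_of_aeval_apply_eq_zero f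
  have orbit_span : Submodule.span K
      (Set.range fun i : Fin (minpoly K f).natDegree ↦ (f ^ (i : ℕ)) x) = ⊤ :=
    (linearIndependent_pow_apply hx).span_eq_top_of_card_eq_finrank'
      ((Fintype.card_fin _).trans hf)
  have orbit_subset : Set.range (fun i : Fin (minpoly K f).natDegree ↦ (f ^ (i : ℕ)) x) ⊆
      (LinearMap.applyₗ x ∘ₗ (aeval (R := K) f).toLinearMap).range :=
    Set.range_subset_iff.2 fun i ↦ ⟨X ^ (i : ℕ), by simp⟩
  exact ⟨x, fun v ↦ Submodule.span_le.2 orbit_subset (orbit_span ▸ Submodule.mem_top)⟩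

end CyclicVector

section TraceForm

attribute [local instance] LieRing.ofAssociativeRing

variable {R K A M V : Type*}

theorem traceForm_end_apply [CommRing R] [AddCommGroup M] [Module R M] (a b : End R M) :
    LieModule.traceForm R (End R M) M a b = LinearMap.trace R M (a * b) :=
  rfl

theorem traceForm_end_nondegenerate [CommRing R] [AddCommGroup M] [Module R M] [Module.Free R M]
    [Module.Finite R M] : (LieModule.traceForm R (End R M) M).Nondegenerate := by
  refine (LieModule.traceForm_isSymm R (End R M) M).isRefl.nondegenerate_iff_separatingLeft.2
    fun a ha ↦ ?_
  let e := LinearMap.toMatrixAlgEquiv (Module.Free.chooseBasis R M)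
  apply e.injective
  rw [map_zero, Matrix.ext_iff_trace_mul_right]
  intro N
  obtain ⟨b, rfl⟩ := e.surjective N
  rw [zero_mul, Matrix.trace_zero, ← map_mul, ← ha b, traceForm_end_apply]
  exact (LinearMap.trace_eq_matrix_trace R _ _).symm

theorem ker_ad_eq_centralizer [CommRing R] [Ring A] [Algebra R A] (a : A) :
    LinearMap.ker (LieAlgebra.ad R A a) = (Subalgebra.centralizer R {a}).toSubmodule := by
  ext b
  simp [Ring.lie_def, sub_eq_zero, Subalgebra.mem_centralizer_iff]

theorem range_ad_eq_orthogonal_centralizer [Field K] [AddCommGroup V] [Module K V]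
    [FiniteDimensional K V] (f : End K V) :
    LinearMap.range (LieAlgebra.ad K (End K V) f) =
      (LieModule.traceForm K (End K V) V).orthogonal
        (Subalgebra.centralizer K {f}).toSubmodule := by
  rw [← ker_ad_eq_centralizer]
  exact range_toEnd_eq_orthogonal_ker traceForm_end_nondegenerate
    (LieModule.traceForm_isSymm K _ V).isRefl (LieModule.traceForm_lieInvariant K _ V) f

theorem mem_orthogonal_adjoin_singleton_iff [CommSemiring R] [Semiring A] [Algebra R A]
    (B : LinearMap.BilinForm R A) (a b : A) :
    b ∈ B.orthogonal (Algebra.adjoin R {a}).toSubmodule ↔ ∀ i : ℕ, B (a ^ i) b = 0 := by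
  have adjoin_le_ker_iff : (Algebra.adjoin R {a}).toSubmodule ≤ LinearMap.ker (B.flip b) ↔
      ∀ i : ℕ, B (a ^ i) b = 0 := by
    rw [Algebra.adjoin_toSubmodule_le, ← Submonoid.powers_eq_closure, Submonoid.coe_powers,
      Set.range_subset_iff]
    rfl
  exact adjoin_le_ker_iff

theorem image_adjoint_eq_trace_orthogonal_general [Field K] [AddCommGroup V] [Module K V]
    [FiniteDimensional K V] (f : End K V) (hf : (minpoly K f).natDegree = finrank K V)
    (u : End K V) :
    (∃ g : End K V, u = f * g - g * f) ↔ ∀ i : ℕ, LinearMap.trace K V (f ^ i * u) = 0 := by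
  obtain ⟨x, hx⟩ := exists_isCyclicVector_of_natDegree_minpoly_eq_finrank hf
  calc (∃ g : End K V, u = f * g - g * f)
      ↔ u ∈ LinearMap.range (LieAlgebra.ad K (End K V) f) := exists_congr fun _ ↦ eq_comm
    _ ↔ u ∈ (LieModule.traceForm K (End K V) V).orthogonal
          (Algebra.adjoin K {f}).toSubmodule := by
        rw [range_ad_eq_orthogonal_centralizer, hx.centralizer_eq_adjoin]
    _ ↔ ∀ i : ℕ, LinearMap.trace K V (f ^ i * u) = 0 := mem_orthogonal_adjoin_singleton_iff _ f u

end TraceForm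

/-- Let `V` be a finite-dimensional complex vector space of dimension `r`
and `f : V → V` a linear endomorphism whose minimal polynomial has degree `r`.
Then an endomorphism `u` of `V` is of the form `u = f∘g − g∘f` for some `g` if and only if
`Tr(fⁱ ∘ u) = 0` for every natural number `i`; i.e. `im (ad f)` equals the trace-orthogonal
complement of the polynomials in `f`. -/
theorem image_adjoint_eq_trace_orthogonal
    (V : Type*) [AddCommGroup V] [Module ℂ V] [FiniteDimensional ℂ V]
    (f : Module.End ℂ V)
    (hf : (minpoly ℂ f).natDegree = Module.finrank ℂ V)
    (u : Module.End ℂ V) :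
    (∃ g : Module.End ℂ V, u = f * g - g * f) ↔
      ∀ i : ℕ, LinearMap.trace ℂ V (f ^ i * u) = 0 :=
  image_adjoint_eq_trace_orthogonal_general f hf u
end

section
/- Let V be a finite-dimensional complex vector space, f : V → V a linear endomorphism whose minimal polynomial has degree dim V, θ : V* → V a symmetric linear isomorphism and κ : V → V* a symmetric linear map with f = θ ∘ κ. Fix a polynomial P ∈ ℂ[T] and set τ := θ ∘ ᵗ(P(f)) and ξ := −ᵗ(P(f)) ∘ κ. If τ' : V* → V and ξ' : V → V* are symmetric linear maps with Tr(fⁱ ∘ (θ∘ξ' + τ'∘κ)) = 0 for every natural number i, then Tr(τ∘ξ' − τ'∘ξ) = 0. (This is the vanishing of the pairing (1/2)Tr(τ∘ξ' − τ'∘ξ) on coboundaries, which makes it well defined on the tangent space of the adjoint orbit.) -/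
/-!
Symmetry of `θ` and `κ` says `ᵗ(θ ∘ κ) = κ ∘ θ`, hence `ᵗ(P(f)) = P(κ ∘ θ)` for `f = θ ∘ κ`.
Since `θ ∘ P(κ ∘ θ) = P(f) ∘ θ` and `P(κ ∘ θ) ∘ κ = κ ∘ P(f)`, cyclicity of the trace rewrites
`Tr(τ ∘ ξ' - τ' ∘ ξ)` as `Tr(P(f) ∘ (θ ∘ ξ' + τ' ∘ κ))`, a linear combination of the traces
`Tr(fⁱ ∘ (θ ∘ ξ' + τ' ∘ κ))`.
-/

section

open Module Polynomial

section CommSemiring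

variable {R M N : Type*} [CommSemiring R] [AddCommMonoid M] [Module R M]
  [AddCommMonoid N] [Module R N]

theorem map_aeval_eq_zero_of_map_pow_eq_zero {A : Type*} [Semiring A] [Algebra R A]
    {l : A →ₗ[R] N} {a : A} (h : ∀ i : ℕ, l (a ^ i) = 0) (P : R[X]) : l (aeval a P) = 0 := by
  simp [aeval_eq_sum_range, h]

theorem trace_aeval_comp_eq_zero {f g : End R M}
    (h : ∀ i : ℕ, LinearMap.trace R M ((f ^ i) ∘ₗ g) = 0) (P : R[X]) :
    LinearMap.trace R M (aeval f P ∘ₗ g) = 0 :=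
  map_aeval_eq_zero_of_map_pow_eq_zero (l := LinearMap.trace R M ∘ₗ LinearMap.mulRight R g) h P

theorem comp_aeval_eq_aeval_comp {a : End R M} {b : End R N} {g : M →ₗ[R] N}
    (h : b ∘ₗ g = g ∘ₗ a) (P : R[X]) : g ∘ₗ aeval a P = aeval b P ∘ₗ g := by
  induction P using Polynomial.induction_on' with
  | add p q hp hq => simp only [map_add, LinearMap.comp_add, LinearMap.add_comp, hp, hq]
  | monomial n c =>
    simp only [aeval_monomial, ← Algebra.smul_def, LinearMap.comp_smul, LinearMap.smul_comp,
      End.commute_pow_left_of_commute h]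

theorem comp_aeval_comp_comm (g : M →ₗ[R] N) (h : N →ₗ[R] M) (P : R[X]) :
    g ∘ₗ aeval (h ∘ₗ g) P = aeval (g ∘ₗ h) P ∘ₗ g :=
  comp_aeval_eq_aeval_comp (LinearMap.comp_assoc g h g) P

theorem dualMap_pow (f : End R M) (n : ℕ) : (f ^ n).dualMap = f.dualMap ^ n := by
  induction n with
  | zero => rfl
  | succ n ih =>
    rw [pow_succ, pow_succ', ← ih]
    rfl

theorem dualMap_aeval (f : End R M) (P : R[X]) :
    (aeval f P).dualMap = aeval f.dualMap P := by
  change Dual.transpose (R := R) (aeval f P) = _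
  simp only [aeval_eq_sum_range, map_sum, map_smul]
  exact Finset.sum_congr rfl fun i _ ↦ congrArg _ (dualMap_pow f i)

theorem dualMap_comp_eq_comp_of_symmetric {θ : Dual R M →ₗ[R] M} {κ : M →ₗ[R] Dual R M}
    (hθ : ∀ φ ψ : Dual R M, ψ (θ φ) = φ (θ ψ)) (hκ : ∀ v w : M, κ v w = κ w v) :
    (θ ∘ₗ κ).dualMap = κ ∘ₗ θ := by
  ext φ v
  calc φ (θ (κ v)) = κ v (θ φ) := hθ (κ v) φ
    _ = κ (θ φ) v := hκ v (θ φ)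

theorem dualMap_aeval_comp_of_symmetric {θ : Dual R M →ₗ[R] M} {κ : M →ₗ[R] Dual R M}
    (hθ : ∀ φ ψ : Dual R M, ψ (θ φ) = φ (θ ψ)) (hκ : ∀ v w : M, κ v w = κ w v) (P : R[X]) :
    (aeval (θ ∘ₗ κ) P).dualMap = aeval (κ ∘ₗ θ) P := by
  rw [dualMap_aeval, dualMap_comp_eq_comp_of_symmetric hθ hκ]

end CommSemiring

section CommRing

variable {R M : Type*} [CommRing R] [AddCommGroup M] [Module R M]
  [Module.Free R M] [Module.Finite R M]

theorem trace_pairing_eq_trace_aeval_comp {θ : Dual R M →ₗ[R] M} {κ : M →ₗ[R] Dual R M}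
    (hθ : ∀ φ ψ : Dual R M, ψ (θ φ) = φ (θ ψ)) (hκ : ∀ v w : M, κ v w = κ w v) (P : R[X])
    (τ' : Dual R M →ₗ[R] M) (ξ' : M →ₗ[R] Dual R M) :
    LinearMap.trace R M ((θ ∘ₗ (aeval (θ ∘ₗ κ) P).dualMap) ∘ₗ ξ' -
        τ' ∘ₗ (-((aeval (θ ∘ₗ κ) P).dualMap ∘ₗ κ))) =
      LinearMap.trace R M (aeval (θ ∘ₗ κ) P ∘ₗ (θ ∘ₗ ξ' + τ' ∘ₗ κ)) := by
  have cyclic : LinearMap.trace R M (τ' ∘ₗ κ ∘ₗ aeval (θ ∘ₗ κ) P) =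
      LinearMap.trace R M (aeval (θ ∘ₗ κ) P ∘ₗ τ' ∘ₗ κ) :=
    LinearMap.trace_comp_comm' (aeval (θ ∘ₗ κ) P) (τ' ∘ₗ κ)
  rw [dualMap_aeval_comp_of_symmetric hθ hκ, comp_aeval_comp_comm θ κ,
    ← comp_aeval_comp_comm κ θ, LinearMap.comp_neg, sub_neg_eq_add, map_add, cyclic,
    LinearMap.comp_assoc, ← map_add, ← LinearMap.comp_add]

theorem pairing_vanishes_on_coboundaries_general {f : End R M}
    {θ : Dual R M →ₗ[R] M} {κ : M →ₗ[R] Dual R M}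
    (hθ : ∀ φ ψ : Dual R M, ψ (θ φ) = φ (θ ψ)) (hκ : ∀ v w : M, κ v w = κ w v)
    (hf : f = θ ∘ₗ κ) {P : R[X]} {τ : Dual R M →ₗ[R] M} {ξ : M →ₗ[R] Dual R M}
    (hτ : τ = θ ∘ₗ (aeval f P).dualMap) (hξ : ξ = -((aeval f P).dualMap ∘ₗ κ))
    {τ' : Dual R M →ₗ[R] M} {ξ' : M →ₗ[R] Dual R M}
    (htr : ∀ i : ℕ, LinearMap.trace R M ((f ^ i) ∘ₗ (θ ∘ₗ ξ' + τ' ∘ₗ κ)) = 0) :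
    LinearMap.trace R M (τ ∘ₗ ξ' - τ' ∘ₗ ξ) = 0 := by
  subst hf hτ hξ
  rw [trace_pairing_eq_trace_aeval_comp hθ hκ]
  exact trace_aeval_comp_eq_zero htr P

end CommRing

end

/-- With `f = θ ∘ κ` a symmetric factorization of an endomorphism whose
minimal polynomial has degree `dim V`, let `P ∈ ℂ[T]` and set `τ := θ ∘ ᵗ(P(f))`,
`ξ := −ᵗ(P(f)) ∘ κ`.  If `τ', ξ'` are symmetric with `Tr(fⁱ ∘ (θ∘ξ' + τ'∘κ)) = 0`
for every `i`, then `Tr(τ∘ξ' − τ'∘ξ) = 0`. -/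
theorem pairing_vanishes_on_coboundaries
    (V : Type*) [AddCommGroup V] [Module ℂ V] [FiniteDimensional ℂ V]
    (f : Module.End ℂ V)
    (hf : (minpoly ℂ f).natDegree = Module.finrank ℂ V)
    (θ : Module.Dual ℂ V →ₗ[ℂ] V) (κ : V →ₗ[ℂ] Module.Dual ℂ V)
    (hθbij : Function.Bijective θ)
    (hθsym : ∀ φ ψ : Module.Dual ℂ V, ψ (θ φ) = φ (θ ψ))
    (hκsym : ∀ v w : V, κ v w = κ w v)
    (hfθκ : f = θ ∘ₗ κ)
    (P : Polynomial ℂ)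
    (τ : Module.Dual ℂ V →ₗ[ℂ] V) (ξ : V →ₗ[ℂ] Module.Dual ℂ V)
    (hτ : τ = θ ∘ₗ LinearMap.dualMap (Polynomial.aeval f P))
    (hξ : ξ = -(LinearMap.dualMap (Polynomial.aeval f P) ∘ₗ κ))
    (τ' : Module.Dual ℂ V →ₗ[ℂ] V) (ξ' : V →ₗ[ℂ] Module.Dual ℂ V)
    (hτ'sym : ∀ φ ψ : Module.Dual ℂ V, ψ (τ' φ) = φ (τ' ψ))
    (hξ'sym : ∀ v w : V, ξ' v w = ξ' w v)
    (htr : ∀ i : ℕ,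
      LinearMap.trace ℂ V ((f ^ i) ∘ₗ (θ ∘ₗ ξ' + τ' ∘ₗ κ)) = 0) :
    LinearMap.trace ℂ V (τ ∘ₗ ξ' - τ' ∘ₗ ξ) = 0 := by
  exact pairing_vanishes_on_coboundaries_general hθsym hκsym hfθκ hτ hξ htr
end

section
/- Let m ≥ 1 be an integer and α a real number with 0 ≤ α and (m−1)·α ≤ π/2. Let w and q be complex numbers with |arg w| ≤ α and |arg q| ≤ α. Then Re(∑_{l=0}^{m−1} w^{m−1−l}·q^{l}) ≥ (max(|w|, |q|))^{m−1}·cos((m−1)·α). -/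
open Complex

/-!
The monomial `w ^ a * q ^ b` has polar angle `a * arg w + b * arg q`, of absolute value at most
`(a + b) * α`. Hence for `a + b = m - 1` every term of the sum has real part at least
`‖w‖ ^ a * ‖q‖ ^ b * cos ((m - 1) * α) ≥ 0`, and the sum dominates each of its terms, in particular
the pure power `w ^ (m - 1)` or `q ^ (m - 1)` of the number with the larger modulus.
-/

theorem cos_le_cos_of_abs_le {θ φ : ℝ} (hφ : |φ| ≤ θ) (hθ : θ ≤ Real.pi) :
    Real.cos θ ≤ Real.cos φ := by
  rw [← Real.cos_abs φ]
  exact Real.cos_le_cos_of_nonneg_of_le_pi (abs_nonneg φ) hθ hφ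

theorem abs_natCast_mul_add_natCast_mul_le {R : Type*} [Ring R] [LinearOrder R] [IsOrderedRing R]
    {x y α β : R} (hx : |x| ≤ α) (hy : |y| ≤ β) (a b : ℕ) :
    |a * x + b * y| ≤ a * α + b * β :=
  calc |a * x + b * y|
      ≤ |a * x| + |b * y| := abs_add_le _ _
    _ = a * |x| + b * |y| := by rw [abs_mul, abs_mul, Nat.abs_cast, Nat.abs_cast]
    _ ≤ a * α + b * β := by gcongr

theorem pow_eq_norm_pow_mul_exp_arg_mul_I (z : ℂ) (n : ℕ) :
    z ^ n = (‖z‖ ^ n : ℝ) * exp ((n * z.arg : ℝ) * I) := by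
  conv_lhs => rw [← norm_mul_exp_arg_mul_I z, mul_pow, ← exp_nat_mul, ← mul_assoc]
  push_cast
  rfl

theorem re_pow_mul_pow (w q : ℂ) (a b : ℕ) :
    (w ^ a * q ^ b).re = ‖w‖ ^ a * ‖q‖ ^ b * Real.cos (a * w.arg + b * q.arg) := by
  have polar_form : w ^ a * q ^ b =
      (‖w‖ ^ a * ‖q‖ ^ b : ℝ) * exp ((a * w.arg + b * q.arg : ℝ) * I) := by
    rw [pow_eq_norm_pow_mul_exp_arg_mul_I w, pow_eq_norm_pow_mul_exp_arg_mul_I q,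
      mul_mul_mul_comm, ← exp_add, ← add_mul, ← ofReal_mul, ← ofReal_add]
  rw [polar_form, re_ofReal_mul, exp_ofReal_mul_I_re]

section Sector

variable {w q : ℂ} {α β : ℝ}

theorem norm_pow_mul_norm_pow_mul_cos_le_re (hw : |w.arg| ≤ α) (hq : |q.arg| ≤ β) {a b : ℕ}
    (hαβ : a * α + b * β ≤ Real.pi) :
    ‖w‖ ^ a * ‖q‖ ^ b * Real.cos (a * α + b * β) ≤ (w ^ a * q ^ b).re := by
  rw [re_pow_mul_pow]
  gcongr
  exact cos_le_cos_of_abs_le (abs_natCast_mul_add_natCast_mul_le hw hq a b) hαβ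

theorem re_pow_mul_pow_nonneg (hw : |w.arg| ≤ α) (hq : |q.arg| ≤ β) {a b : ℕ}
    (hαβ : a * α + b * β ≤ Real.pi / 2) : 0 ≤ (w ^ a * q ^ b).re := by
  have harg : |a * w.arg + b * q.arg| ≤ Real.pi / 2 :=
    (abs_natCast_mul_add_natCast_mul_le hw hq a b).trans hαβ
  have hcos := Real.cos_nonneg_of_mem_Icc (abs_le.mp harg)
  rw [re_pow_mul_pow]
  positivity

open Finset.HasAntidiagonal

theorem sum_antidiagonal_pow_mul_pow {R : Type*} [Semiring R] (x y : R) (n : ℕ) :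
    ∑ p ∈ antidiagonal n, x ^ p.1 * y ^ p.2 =
      ∑ l ∈ Finset.range (n + 1), x ^ (n - l) * y ^ l := by
  rw [← Finset.Nat.sum_antidiagonal_swap]
  exact Finset.Nat.sum_antidiagonal_eq_sum_range_succ (fun i j => x ^ j * y ^ i) n

theorem norm_pow_mul_norm_pow_mul_cos_le_re_sum_antidiagonal
    (hw : |w.arg| ≤ α) (hq : |q.arg| ≤ α) {a b n : ℕ} (hab : a + b = n)
    (hα : n * α ≤ Real.pi / 2) :
    ‖w‖ ^ a * ‖q‖ ^ b * Real.cos (n * α) ≤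
      (∑ p ∈ antidiagonal n, w ^ p.1 * q ^ p.2).re := by
  have total_angle {i j : ℕ} (hij : i + j = n) : i * α + j * α = n * α := by
    rw [← add_mul, ← Nat.cast_add, hij]
  have term_nonneg : ∀ p ∈ antidiagonal n, 0 ≤ (w ^ p.1 * q ^ p.2).re := fun p hp =>
    re_pow_mul_pow_nonneg hw hq ((total_angle (mem_antidiagonal.mp hp)).trans_le hα)
  calc ‖w‖ ^ a * ‖q‖ ^ b * Real.cos (n * α)
      ≤ (w ^ a * q ^ b).re := by
        rw [← total_angle hab] at hα ⊢
        exact norm_pow_mul_norm_pow_mul_cos_le_re hw hq (hα.trans (half_le_self Real.pi_nonneg))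
    _ ≤ ∑ p ∈ antidiagonal n, (w ^ p.1 * q ^ p.2).re :=
        Finset.single_le_sum term_nonneg (a := (a, b)) (mem_antidiagonal.mpr hab)
    _ = (∑ p ∈ antidiagonal n, w ^ p.1 * q ^ p.2).re := (re_sum _ _).symm

theorem max_norm_pow_mul_cos_le_re_sum_antidiagonal
    (hw : |w.arg| ≤ α) (hq : |q.arg| ≤ α) {n : ℕ} (hα : n * α ≤ Real.pi / 2) :
    max ‖w‖ ‖q‖ ^ n * Real.cos (n * α) ≤
      (∑ p ∈ antidiagonal n, w ^ p.1 * q ^ p.2).re := by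
  rcases max_choice ‖w‖ ‖q‖ with hmax | hmax <;> rw [hmax]
  · simpa only [pow_zero, mul_one] using
      norm_pow_mul_norm_pow_mul_cos_le_re_sum_antidiagonal hw hq (add_zero n) hα
  · simpa only [pow_zero, one_mul] using
      norm_pow_mul_norm_pow_mul_cos_le_re_sum_antidiagonal hw hq (zero_add n) hα

end Sector

/-- Let `m ≥ 1` and `0 ≤ α` with `(m−1)·α ≤ π/2`.  If `w, q ∈ ℂ`
satisfy `|arg w| ≤ α` and `|arg q| ≤ α`, then
`Re(∑_{l=0}^{m−1} w^{m−1−l}·q^l) ≥ (max(|w|,|q|))^{m−1}·cos((m−1)·α)`. -/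
theorem re_geom_sum_ge
    (m : ℕ) (hm : 1 ≤ m) (α : ℝ) (hα0 : 0 ≤ α)
    (hα : ((m : ℝ) - 1) * α ≤ Real.pi / 2)
    (w q : ℂ) (hw : |w.arg| ≤ α) (hq : |q.arg| ≤ α) :
    (max ‖w‖ ‖q‖) ^ (m - 1) *
        Real.cos (((m : ℝ) - 1) * α) ≤
      (∑ l ∈ Finset.range m, w ^ (m - 1 - l) * q ^ l).re := by
  obtain ⟨n, rfl⟩ := Nat.exists_eq_add_of_le' hm
  simp only [Nat.cast_add_one, add_sub_cancel_right, Nat.add_sub_cancel] at hα ⊢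
  rw [← sum_antidiagonal_pow_mul_pow]
  exact max_norm_pow_mul_cos_le_re_sum_antidiagonal hw hq hα
end
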